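/- arXiv:2112.05176 — 3 statements merged into one kernel-verified Lean document; each statement's English description precedes it below -/
import Mathlib

section
/- Let K ∈ St(D,d) be an isometry (K†K = 1_d) and let F ∈ ℂ^{D×d} be arbitrary, defining the ℂ-linear functional f(Δ) = Tr(Fᵀ Δ) on ℂ^{D×d}. Then the matrix X := F* − K Fᵀ K lies in the tangent space T_K St(D,d), i.e. K†X = −X†K, and for every Δ ∈ T_K St(D,d) one has Re{Tr(Fᵀ Δ)} = ⟨X, Δ⟩_K; that is, X solves the equation Re{f(Δ)} = ⟨X, Δ⟩_K for all tangent vectors Δ. -/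
open Matrix

/-- For `K` an isometry and `F` arbitrary, the matrix
`X = F* − K Fᵀ K` is tangent at `K` and solves `Re{Tr(Fᵀ Δ)} = ⟨X, Δ⟩_K`
for all tangent vectors `Δ`, where `⟨·,·⟩_K` is the canonical metric
`⟨Δ₁,Δ₂⟩_K = Re Tr(Δ₁ᴴ (1 − ½KKᴴ) Δ₂)` on the complex Stiefel manifold. -/
theorem stiefel_gradient_formula {D d : ℕ} (K F : Matrix (Fin D) (Fin d) ℂ)
    (hK : Kᴴ * K = 1) :
    let X : Matrix (Fin D) (Fin d) ℂ := F.map (starRingEnd ℂ) - K * Fᵀ * K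
    Kᴴ * X = -(Xᴴ * K) ∧
      ∀ Δ : Matrix (Fin D) (Fin d) ℂ, Kᴴ * Δ = -(Δᴴ * K) →
        (Matrix.trace (Fᵀ * Δ)).re =
          (Matrix.trace
            (Xᴴ * ((1 : Matrix (Fin D) (Fin D) ℂ) - (1 / 2 : ℂ) • (K * Kᴴ)) * Δ)).re := by
  intro X
  obtain ⟨G, hG⟩ : ∃ G : Matrix (Fin D) (Fin d) ℂ, G = F.map (starRingEnd ℂ) := ⟨_, rfl⟩
  have hF : Fᵀ = Gᴴ := by
    subst hG
    ext i j
    simp [Matrix.conjTranspose_apply]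
  have hX : X = G - K * Gᴴ * K := by rw [← hF, hG]
  have hXH : Xᴴ = Gᴴ - Kᴴ * G * Kᴴ := by
    rw [hX]
    simp [Matrix.conjTranspose_mul, Matrix.mul_assoc]
  have hK2 : ∀ {n : ℕ} (M : Matrix (Fin d) (Fin n) ℂ), Kᴴ * (K * M) = M := by
    intro n M
    rw [← Matrix.mul_assoc, hK, Matrix.one_mul]
  refine ⟨?_, ?_⟩
  · rw [hXH, hX, Matrix.mul_sub, Matrix.sub_mul, Matrix.mul_assoc K, hK2,
      Matrix.mul_assoc _ Kᴴ K, hK, Matrix.mul_one, neg_sub]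
  · intro Δ hΔ
    have e : Xᴴ * ((1 : Matrix (Fin D) (Fin D) ℂ) - (1 / 2 : ℂ) • (K * Kᴴ)) * Δ
        = Gᴴ * Δ - (1 / 2 : ℂ) • (Kᴴ * G * (Kᴴ * Δ) + Gᴴ * K * (Kᴴ * Δ)) := by
      rw [hXH]
      simp only [Matrix.sub_mul, Matrix.mul_sub, Matrix.mul_one, Matrix.mul_smul,
        Matrix.smul_mul, Matrix.mul_assoc, hK2]
      module
    have hA : (Kᴴ * Δ)ᴴ = -(Kᴴ * Δ) := by
      rw [hΔ]
      simp [Matrix.conjTranspose_mul, hΔ]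
    have key : star (Matrix.trace (Kᴴ * G * (Kᴴ * Δ)))
        = -Matrix.trace (Gᴴ * K * (Kᴴ * Δ)) := by
      rw [← Matrix.trace_conjTranspose, Matrix.conjTranspose_mul, hA, Matrix.neg_mul,
        Matrix.trace_neg, Matrix.trace_mul_comm, Matrix.conjTranspose_mul,
        Matrix.conjTranspose_conjTranspose]
    have kre := congrArg Complex.re key
    simp only [Complex.star_def, Complex.conj_re, Complex.neg_re] at kre
    rw [e, hF, Matrix.trace_sub, Matrix.trace_smul, Matrix.trace_add]
    have h2 : (1 / 2 : ℂ) = ((1 / 2 : ℝ) : ℂ) := by push_cast; rfl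
    rw [h2, smul_eq_mul, Complex.sub_re, Complex.re_ofReal_mul, Complex.add_re, kre]
    ring
end

section
/- Let K ∈ ℂ^{D×d} with K†K = 1_d, set Π = 1_D − KK† and Γ = 1_D − ½KK†, and let L ∈ ℂ^{D×d} be arbitrary. For Δ ∈ T_K St(D,d) define f_K(Δ) := 2KΔ†L* + Γ⁻¹L*Δ†K − ΠΔK†L* − ΠΔLᵀK. Then for all Δ, Ω ∈ T_K St(D,d): Re{Tr[Lᵀ(ΔK†Ω + ΩK†Δ)]} − Re{Tr[LᵀK(Δ†ΠΩ + Ω†ΠΔ)]} = Re{Tr[f_K(Δ)† Γ Ω]} = ⟨f_K(Δ), Ω⟩_K. -/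
open Matrix

/-- The map `f_K(Δ) = 2KΔᴴL* + Γ⁻¹L*ΔᴴK − ΠΔKᴴL* − ΠΔLᵀK` appearing in the
Riemannian Newton equation on the complex Stiefel manifold, where
`Π = 1 − KKᴴ` and `Γ⁻¹ = 1 + KKᴴ`. -/
noncomputable def stiefelFK {D d : ℕ} (K L Δ : Matrix (Fin D) (Fin d) ℂ) :
    Matrix (Fin D) (Fin d) ℂ :=
  (2 : ℂ) • (K * Δᴴ * L.map (starRingEnd ℂ)) +
    ((1 : Matrix (Fin D) (Fin D) ℂ) + K * Kᴴ) * L.map (starRingEnd ℂ) * Δᴴ * K -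
    ((1 : Matrix (Fin D) (Fin D) ℂ) - K * Kᴴ) * Δ * Kᴴ * L.map (starRingEnd ℂ) -
    ((1 : Matrix (Fin D) (Fin D) ℂ) - K * Kᴴ) * Δ * Lᵀ * K

/-- for all tangent vectors `Δ, Ω` at the isometry `K`,
`Re Tr[Lᵀ(ΔKᴴΩ + ΩKᴴΔ)] − Re Tr[LᵀK(ΔᴴΠΩ + ΩᴴΠΔ)] = Re Tr[f_K(Δ)ᴴ Γ Ω]
= ⟨f_K(Δ), Ω⟩_K`, the canonical metric pairing with `Γ = 1 − ½KKᴴ`. -/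
theorem stiefel_fK_identity {D d : ℕ} (K L : Matrix (Fin D) (Fin d) ℂ)
    (hK : Kᴴ * K = 1) :
    ∀ Δ Ω : Matrix (Fin D) (Fin d) ℂ,
      Kᴴ * Δ = -(Δᴴ * K) → Kᴴ * Ω = -(Ωᴴ * K) →
      (Matrix.trace (Lᵀ * (Δ * Kᴴ * Ω + Ω * Kᴴ * Δ))).re -
        (Matrix.trace (Lᵀ * K *
          (Δᴴ * ((1 : Matrix (Fin D) (Fin D) ℂ) - K * Kᴴ) * Ω +
            Ωᴴ * ((1 : Matrix (Fin D) (Fin D) ℂ) - K * Kᴴ) * Δ))).re =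
      (Matrix.trace ((stiefelFK K L Δ)ᴴ *
        ((1 : Matrix (Fin D) (Fin D) ℂ) - (1 / 2 : ℂ) • (K * Kᴴ)) * Ω)).re := by
  intro Δ Ω _ _
  have hL : (L.map (starRingEnd ℂ))ᴴ = Lᵀ := by
    ext i j
    simp [Matrix.conjTranspose_apply]
  have hLT : Lᵀᴴ = L.map (starRingEnd ℂ) := by
    rw [← hL, conjTranspose_conjTranspose]
  set M := L.map (starRingEnd ℂ) with hM
  set P : Matrix (Fin D) (Fin D) ℂ := 1 - K * Kᴴ with hP
  set G : Matrix (Fin D) (Fin D) ℂ := 1 - (1 / 2 : ℂ) • (K * Kᴴ) with hG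
  have hKK : K * Kᴴ * (K * Kᴴ) = K * Kᴴ := by
    rw [Matrix.mul_assoc, ← Matrix.mul_assoc Kᴴ, hK, Matrix.one_mul]
  have hPH : Pᴴ = P := by simp [hP]
  have hKG : Kᴴ * G = (1 / 2 : ℂ) • Kᴴ := by
    rw [hG, Matrix.mul_sub, Matrix.mul_one, Matrix.mul_smul, ← Matrix.mul_assoc, hK,
      Matrix.one_mul]
    module
  have hIG : (1 + K * Kᴴ) * G = 1 := by
    rw [hG, Matrix.mul_sub, Matrix.mul_one, Matrix.mul_smul, Matrix.add_mul, hKK,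
      Matrix.one_mul]
    module
  have hPG : P * G = P := by
    rw [hG, hP, Matrix.mul_sub, Matrix.mul_one, Matrix.mul_smul, Matrix.sub_mul, hKK,
      Matrix.one_mul]
    module
  have hf : (stiefelFK K L Δ)ᴴ * G = Lᵀ * Δ * Kᴴ + Kᴴ * Δ * Lᵀ - Lᵀ * K * Δᴴ * P
      - Kᴴ * M * Δᴴ * P := by
    have h1 : (stiefelFK K L Δ)ᴴ = (2 : ℂ) • (Lᵀ * Δ * Kᴴ) + Kᴴ * Δ * Lᵀ * (1 + K * Kᴴ)
        - Lᵀ * K * Δᴴ * P - Kᴴ * M * Δᴴ * P := by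
      unfold stiefelFK
      rw [← hM, ← hP]
      simp only [conjTranspose_sub, conjTranspose_add, conjTranspose_smul, conjTranspose_mul,
        conjTranspose_conjTranspose, conjTranspose_one, hL, hLT, hPH, Matrix.mul_assoc]
      simp
    rw [h1, Matrix.sub_mul, Matrix.sub_mul, Matrix.add_mul, Matrix.smul_mul,
      Matrix.mul_assoc (Lᵀ * Δ), hKG, Matrix.mul_assoc (Kᴴ * Δ * Lᵀ), hIG,
      Matrix.mul_assoc (Lᵀ * K * Δᴴ), Matrix.mul_assoc (Kᴴ * M * Δᴴ), hPG, Matrix.mul_one,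
      Matrix.mul_smul, smul_smul]
    norm_num
  have h2 : (Kᴴ * Δ * Lᵀ * Ω).trace = (Lᵀ * (Ω * Kᴴ * Δ)).trace := by
    rw [Matrix.mul_assoc (Kᴴ * Δ), Matrix.trace_mul_comm]
    simp only [Matrix.mul_assoc]
  have h4 : (Kᴴ * M * Δᴴ * P * Ω).trace.re = (Lᵀ * K * (Ωᴴ * P * Δ)).trace.re := by
    have : (Kᴴ * M * Δᴴ * P * Ω)ᴴ = (Ωᴴ * P * Δ) * (Lᵀ * K) := by
      simp only [conjTranspose_mul, conjTranspose_conjTranspose, hL, hPH, Matrix.mul_assoc]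
    rw [Matrix.trace_mul_comm (Lᵀ * K), ← this, Matrix.trace_conjTranspose]
    simp
  rw [hf]
  simp only [Matrix.sub_mul, Matrix.add_mul, Matrix.mul_add, Matrix.trace_add, Matrix.trace_sub,
    Complex.add_re, Complex.sub_re, h2, h4]
  simp only [Matrix.mul_assoc]
  ring
end

section
/- Let K ∈ ℂ^{D×d} with K†K = 1_d, set Π = 1_D − KK† and Γ⁻¹ = 1_D + KK†, let L ∈ ℂ^{D×d}, and for Δ ∈ T_K St(D,d) define f_K(Δ) := 2KΔ†L* + Γ⁻¹L*Δ†K − ΠΔK†L* − ΠΔLᵀK. Then the tangent-space projection P_T(X) = X − K(K†X + X†K)/2 satisfies, for every Δ ∈ T_K St(D,d): P_T(f_K(Δ)) = −ΠΔK†L* − 2·skew(ΔLᵀ)K − 2K·skew(LᵀΔ), where skew(M) := (M − M†)/2. -/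
open Matrix

/-- The skew-Hermitian part `skew(M) = (M − Mᴴ)/2`. -/
noncomputable def skewPart {n : ℕ} (M : Matrix (Fin n) (Fin n) ℂ) :
    Matrix (Fin n) (Fin n) ℂ :=
  (1 / 2 : ℂ) • (M - Mᴴ)

/-- for every tangent vector `Δ` at the isometry `K`, the
tangent-space projection `P_T(X) = X − K(KᴴX + XᴴK)/2` satisfies
`P_T(f_K(Δ)) = −ΠΔKᴴL* − 2 skew(ΔLᵀ)K − 2K skew(LᵀΔ)`. -/
theorem stiefel_fK_projection {D d : ℕ} (K L : Matrix (Fin D) (Fin d) ℂ)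
    (hK : Kᴴ * K = 1) :
    ∀ Δ : Matrix (Fin D) (Fin d) ℂ, Kᴴ * Δ = -(Δᴴ * K) →
      stiefelFK K L Δ -
          (1 / 2 : ℂ) • (K * (Kᴴ * stiefelFK K L Δ + (stiefelFK K L Δ)ᴴ * K)) =
        -(((1 : Matrix (Fin D) (Fin D) ℂ) - K * Kᴴ) * Δ * Kᴴ *
            L.map (starRingEnd ℂ)) -
          (2 : ℂ) • (skewPart (Δ * Lᵀ) * K) -
          (2 : ℂ) • (K * skewPart (Lᵀ * Δ)) := by
  intro Δ _
  obtain ⟨M, hM⟩ : ∃ M, M = L.map (starRingEnd ℂ) := ⟨_, rfl⟩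
  have hL : Lᵀ = Mᴴ := by
    subst hM; ext i j; simp [Matrix.conjTranspose_apply]
  have hK' : ∀ X : Matrix (Fin d) (Fin d) ℂ, Kᴴ * (K * X) = X := by
    intro X; rw [← Matrix.mul_assoc, hK, Matrix.one_mul]
  have h1 : Kᴴ * stiefelFK K L Δ = (2 : ℂ) • (Δᴴ * M + Kᴴ * (M * (Δᴴ * K))) := by
    rw [stiefelFK, ← hM, hL]
    simp only [Matrix.mul_add, Matrix.mul_sub, Matrix.add_mul, Matrix.sub_mul, Matrix.one_mul,
      Matrix.mul_smul, Matrix.mul_assoc, hK']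
    module
  have h2 : (stiefelFK K L Δ)ᴴ * K = (2 : ℂ) • (Mᴴ * Δ + Kᴴ * (Δ * (Mᴴ * K))) := by
    have := congrArg Matrix.conjTranspose h1
    simpa [Matrix.conjTranspose_mul, Matrix.mul_assoc] using this
  rw [h1, h2, stiefelFK, ← hM, hL, skewPart, skewPart]
  simp only [Matrix.conjTranspose_mul, Matrix.conjTranspose_conjTranspose,
    Matrix.mul_add, Matrix.mul_sub, Matrix.add_mul, Matrix.sub_mul, Matrix.one_mul,
    Matrix.mul_smul, Matrix.smul_mul, Matrix.mul_assoc]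
  module
end
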